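/- Let L > 0, T > 0, μ > 0, γ > 1, and let ρ₀ : [0,L] → ℝ be continuous with ρ₀ ≥ 0. Let (J₁, v₁, π₁) and (J₂, v₂, π₂) be two classical solutions of (E1)–(E3) on [0,L]×[0,T], each continuously differentiable to the required order with continuous derivatives on [0,L]×[0,T] and with J₁ > 0, J₂ > 0 everywhere, satisfying the same boundary condition vᵢ(0,t) = vᵢ(L,t) = 0 for all t ∈ [0,T] (i = 1,2) and the same initial data: J₁(·,0) = J₂(·,0), v₁(·,0) = v₂(·,0), π₁(·,0) = π₂(·,0) on [0,L]. Then (J₁, v₁, π₁) = (J₂, v₂, π₂) on [0,L]×[0,T]. -/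

import Mathlib

open Set MeasureTheory

/-- A classical solution `(J, v, π)` of the Lagrangian 1D non-heat-conductive compressible
Navier–Stokes system (E1)–(E3) on `[0,L] × [0,T]`, together with its partial derivatives
`Jt = ∂ₜJ`, `vy = ∂_y v`, `vt = ∂ₜv`, `w = ∂_y((∂_y v)/J)`, `πy = ∂_y π`, `πt = ∂ₜπ`,
all continuous on `[0,L] × [0,T]`, and `J > 0` everywhere. -/
structure ClassicalSolution (L T μ γ : ℝ) (ρ₀ : ℝ → ℝ)
    (J v π Jt vy vt w πy πt : ℝ → ℝ → ℝ) : Prop where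
  Jpos : ∀ y ∈ Set.Icc (0:ℝ) L, ∀ t ∈ Set.Icc (0:ℝ) T, 0 < J y t
  contJ : ContinuousOn (fun p : ℝ × ℝ => J p.1 p.2) (Set.Icc 0 L ×ˢ Set.Icc 0 T)
  contv : ContinuousOn (fun p : ℝ × ℝ => v p.1 p.2) (Set.Icc 0 L ×ˢ Set.Icc 0 T)
  contPi : ContinuousOn (fun p : ℝ × ℝ => π p.1 p.2) (Set.Icc 0 L ×ˢ Set.Icc 0 T)
  hJt : ∀ y ∈ Set.Icc (0:ℝ) L, ∀ t ∈ Set.Icc (0:ℝ) T,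
    HasDerivWithinAt (fun s => J y s) (Jt y t) (Set.Icc 0 T) t
  hvy : ∀ y ∈ Set.Icc (0:ℝ) L, ∀ t ∈ Set.Icc (0:ℝ) T,
    HasDerivWithinAt (fun x => v x t) (vy y t) (Set.Icc 0 L) y
  hvt : ∀ y ∈ Set.Icc (0:ℝ) L, ∀ t ∈ Set.Icc (0:ℝ) T,
    HasDerivWithinAt (fun s => v y s) (vt y t) (Set.Icc 0 T) t
  hw : ∀ y ∈ Set.Icc (0:ℝ) L, ∀ t ∈ Set.Icc (0:ℝ) T,
    HasDerivWithinAt (fun x => vy x t / J x t) (w y t) (Set.Icc 0 L) y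
  hPiy : ∀ y ∈ Set.Icc (0:ℝ) L, ∀ t ∈ Set.Icc (0:ℝ) T,
    HasDerivWithinAt (fun x => π x t) (πy y t) (Set.Icc 0 L) y
  hPit : ∀ y ∈ Set.Icc (0:ℝ) L, ∀ t ∈ Set.Icc (0:ℝ) T,
    HasDerivWithinAt (fun s => π y s) (πt y t) (Set.Icc 0 T) t
  contJt : ContinuousOn (fun p : ℝ × ℝ => Jt p.1 p.2) (Set.Icc 0 L ×ˢ Set.Icc 0 T)
  contvy : ContinuousOn (fun p : ℝ × ℝ => vy p.1 p.2) (Set.Icc 0 L ×ˢ Set.Icc 0 T)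
  contvt : ContinuousOn (fun p : ℝ × ℝ => vt p.1 p.2) (Set.Icc 0 L ×ˢ Set.Icc 0 T)
  contw : ContinuousOn (fun p : ℝ × ℝ => w p.1 p.2) (Set.Icc 0 L ×ˢ Set.Icc 0 T)
  contPiy : ContinuousOn (fun p : ℝ × ℝ => πy p.1 p.2) (Set.Icc 0 L ×ˢ Set.Icc 0 T)
  contPit : ContinuousOn (fun p : ℝ × ℝ => πt p.1 p.2) (Set.Icc 0 L ×ˢ Set.Icc 0 T)
  eq1 : ∀ y ∈ Set.Icc (0:ℝ) L, ∀ t ∈ Set.Icc (0:ℝ) T, Jt y t = vy y t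
  eq2 : ∀ y ∈ Set.Icc (0:ℝ) L, ∀ t ∈ Set.Icc (0:ℝ) T,
    ρ₀ y * vt y t - μ * w y t + πy y t = 0
  eq3 : ∀ y ∈ Set.Icc (0:ℝ) L, ∀ t ∈ Set.Icc (0:ℝ) T,
    πt y t + γ * (vy y t / J y t) * π y t = μ * (γ - 1) * (vy y t / J y t) ^ 2

lemma energy_zero (L T C : ℝ) (hL : 0 < L) (hT : 0 < T) (F F' : ℝ → ℝ → ℝ)
    (hF : ContinuousOn (fun p : ℝ × ℝ => F p.1 p.2) (Set.Icc 0 L ×ˢ Set.Icc 0 T))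
    (hF' : ContinuousOn (fun p : ℝ × ℝ => F' p.1 p.2) (Set.Icc 0 L ×ˢ Set.Icc 0 T))
    (hd : ∀ y ∈ Set.Icc (0:ℝ) L, ∀ t ∈ Set.Icc (0:ℝ) T,
      HasDerivWithinAt (fun s => F y s) (F' y t) (Set.Icc 0 T) t)
    (hnn : ∀ y ∈ Set.Icc (0:ℝ) L, ∀ t ∈ Set.Icc (0:ℝ) T, 0 ≤ F y t)
    (h0 : ∀ y ∈ Set.Icc (0:ℝ) L, F y 0 = 0)
    (hC : ∀ t ∈ Set.Icc (0:ℝ) T, ∫ y in (0:ℝ)..L, F' y t ≤ C * ∫ y in (0:ℝ)..L, F y t) :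
    ∀ y ∈ Set.Icc (0:ℝ) L, ∀ t ∈ Set.Icc (0:ℝ) T, F y t = 0 := by
  have slice : ∀ G : ℝ → ℝ → ℝ,
      ContinuousOn (fun p : ℝ × ℝ => G p.1 p.2) (Set.Icc 0 L ×ˢ Set.Icc 0 T) →
      ∀ t ∈ Set.Icc (0:ℝ) T, ContinuousOn (fun y => G y t) (Set.Icc 0 L) := by
    intro G hG t ht
    exact hG.comp (f := fun y : ℝ => (y, t)) (by fun_prop) (fun y hy => ⟨hy, ht⟩)
  have hu : Set.uIcc 0 L = Set.Icc 0 L := Set.uIcc_of_le hL.le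
  have hio : Set.uIoc 0 L ⊆ Set.Icc 0 L := by
    rw [Set.uIoc_of_le hL.le]; exact Set.Ioc_subset_Icc_self
  set E : ℝ → ℝ := fun t => ∫ y in (0:ℝ)..L, F y t with hE
  have hEc : ContinuousOn E (Set.Icc 0 T) := by
    have hc : Continuous (fun p : ℝ × ℝ =>
        F (Set.projIcc 0 L hL.le p.1) (Set.projIcc 0 T hT.le p.2)) := by
      refine hF.comp_continuous (f := fun p : ℝ × ℝ =>
        (((Set.projIcc 0 L hL.le p.1 : ℝ)), ((Set.projIcc 0 T hT.le p.2 : ℝ)))) ?_ ?_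
      · exact (continuous_subtype_val.comp (continuous_projIcc.comp continuous_fst)).prodMk
          (continuous_subtype_val.comp (continuous_projIcc.comp continuous_snd))
      · intro p
        exact ⟨(Set.projIcc 0 L hL.le p.1).2, (Set.projIcc 0 T hT.le p.2).2⟩
    have hc2 := intervalIntegral.continuous_parametric_intervalIntegral_of_continuous'
      (μ := volume) (f := fun t y => F (Set.projIcc 0 L hL.le y) (Set.projIcc 0 T hT.le t))
      (by exact hc.comp continuous_swap) 0 L
    refine hc2.continuousOn.congr ?_
    intro t ht
    refine intervalIntegral.integral_congr ?_
    intro y hy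
    rw [hu] at hy
    simp only [Set.projIcc_of_mem hL.le hy, Set.projIcc_of_mem hT.le ht]
  have hEd : ∀ t ∈ Set.Ioo 0 T, HasDerivAt E (∫ y in (0:ℝ)..L, F' y t) t := by
    intro t ht
    obtain ⟨B, hB⟩ := (isCompact_Icc.prod isCompact_Icc).exists_bound_of_continuousOn hF'
    refine (intervalIntegral.hasDerivAt_integral_of_dominated_loc_of_deriv_le (μ := volume)
      (F := fun t y => F y t) (F' := fun t y => F' y t) (bound := fun _ => B)
      (Ioo_mem_nhds ht.1 ht.2) ?_ ?_ ?_ ?_ ?_ ?_).2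
    · filter_upwards [Ioo_mem_nhds ht.1 ht.2] with s hs
      exact ((slice F hF s (Set.Ioo_subset_Icc_self hs)).mono hio).aestronglyMeasurable
        measurableSet_uIoc
    · exact (hu ▸ slice F hF t (Set.Ioo_subset_Icc_self ht)).intervalIntegrable
    · exact ((slice F' hF' t (Set.Ioo_subset_Icc_self ht)).mono hio).aestronglyMeasurable
        measurableSet_uIoc
    · refine Filter.Eventually.of_forall ?_
      intro y hy s hs
      exact hB (y, s) ⟨hio hy, Set.Ioo_subset_Icc_self hs⟩
    · exact intervalIntegrable_const
    · refine Filter.Eventually.of_forall ?_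
      intro y hy s hs
      exact (hd y (hio hy) s (Set.Ioo_subset_Icc_self hs)).hasDerivAt (Icc_mem_nhds hs.1 hs.2)
  have hanti : AntitoneOn (fun t => Real.exp (-C * t) * E t) (Set.Icc 0 T) := by
    have hder : ∀ t ∈ Set.Ioo 0 T, HasDerivAt (fun t => Real.exp (-C * t) * E t)
        (Real.exp (-C * t) * (-C * 1) * E t + Real.exp (-C * t) * ∫ y in (0:ℝ)..L, F' y t) t := by
      intro t ht
      exact (((hasDerivAt_id t).const_mul (-C)).exp).mul (hEd t ht)
    refine antitoneOn_of_deriv_nonpos (convex_Icc 0 T) ?_ ?_ ?_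
    · exact ContinuousOn.mul (by fun_prop) hEc
    · rw [interior_Icc]
      intro t ht
      exact (hder t ht).differentiableAt.differentiableWithinAt
    · rw [interior_Icc]
      intro t ht
      rw [(hder t ht).deriv]
      have h1 := hC t (Set.Ioo_subset_Icc_self ht)
      have h2 := Real.exp_pos (-C * t)
      have h3 := mul_le_mul_of_nonneg_left h1 h2.le
      change _ ≤ Real.exp (-C * t) * (C * E t) at h3
      linarith
  intro y hy t ht
  have hE0 : E 0 = 0 := by
    have : E 0 = ∫ y in (0:ℝ)..L, (0:ℝ) := by
      refine intervalIntegral.integral_congr ?_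
      intro y hy
      rw [hu] at hy
      exact h0 y hy
    simpa using this
  have hEt : E t ≤ 0 := by
    have h1 := hanti (Set.left_mem_Icc.2 hT.le) ht ht.1
    simp only [hE0, mul_zero] at h1
    by_contra hcon
    push Not at hcon
    have := mul_pos (Real.exp_pos (-C * t)) hcon
    linarith
  by_contra hne
  have hpos : 0 < F y t := lt_of_le_of_ne (hnn y hy t ht) (Ne.symm hne)
  have := intervalIntegral.integral_pos hL (slice F hF t ht)
    (fun x hx => hnn x (Set.Ioc_subset_Icc_self hx) t ht) ⟨y, hy, hpos⟩
  exact absurd hEt (not_le.2 this)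

lemma alg_bound (μ γ j1 j2 A1 A2 p1 p2 : ℝ) (hμ : 0 < μ) (hγ : 1 < γ) (hj : 0 < j1) :
    -(j1 * A1 - j2 * A2) * (μ * (A1 - A2) - (p1 - p2)) + (j1 - j2) * (j1 * A1 - j2 * A2)
      + (p1 - p2) * ((μ * (γ - 1) * A1 ^ 2 - γ * A1 * p1) - (μ * (γ - 1) * A2 ^ 2 - γ * A2 * p2))
    ≤ (((j1 - μ * A2) ^ 2 + (j1 + (μ * (γ - 1) * (A1 + A2) - γ * p1)) ^ 2) / (2 * μ * j1)
        + |A2| * (2 + γ)) * ((j1 - j2) ^ 2 + (p1 - p2) ^ 2) := by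
  set a := A1 - A2 with ha
  set J := j1 - j2 with hJ
  set p := p1 - p2 with hp
  set α := j1 - μ * A2 with hα
  set β := j1 + (μ * (γ - 1) * (A1 + A2) - γ * p1) with hβ
  have e : -(j1 * A1 - j2 * A2) * (μ * a - p) + J * (j1 * A1 - j2 * A2)
      + p * ((μ * (γ - 1) * A1 ^ 2 - γ * A1 * p1) - (μ * (γ - 1) * A2 ^ 2 - γ * A2 * p2))
      = -(μ * j1) * a ^ 2 + a * (α * J + β * p) + A2 * (J * p + J ^ 2 - γ * p ^ 2) := by
    rw [ha, hJ, hp, hα, hβ]; ring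
  rw [e]
  clear_value a J p α β
  clear e
  have hm : 0 < μ * j1 := mul_pos hμ hj
  have h1 : -(μ * j1) * a ^ 2 + a * (α * J + β * p) ≤
      (α ^ 2 + β ^ 2) / (2 * μ * j1) * (J ^ 2 + p ^ 2) := by
    rw [div_mul_eq_mul_div, le_div_iff₀ (by positivity)]
    linarith [sq_nonneg ((α * J + β * p) - (μ * j1) * a), sq_nonneg (α * p - β * J),
      sq_nonneg ((μ * j1) * a)]
  have h2 : A2 * (J * p + J ^ 2 - γ * p ^ 2) ≤ |A2| * ((2 + γ) * (J ^ 2 + p ^ 2)) := by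
    refine (le_abs_self _).trans ?_
    rw [abs_mul]
    refine mul_le_mul_of_nonneg_left ?_ (abs_nonneg _)
    rw [abs_le]
    have := mul_nonneg (by linarith : (0:ℝ) ≤ γ) (sq_nonneg J)
    have := mul_nonneg (by linarith : (0:ℝ) ≤ γ) (sq_nonneg p)
    constructor <;> nlinarith [sq_nonneg (J + p), sq_nonneg (J - p), sq_nonneg J, sq_nonneg p]
  linarith

/-- (Uniqueness part of Theorem 1.1, allowing vacuum `ρ₀ ≥ 0`.) Two
classical solutions of (E1)–(E3) on `[0,L] × [0,T]` with the same homogeneous Dirichlet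
boundary condition for the velocity and the same initial data coincide. -/
theorem uniqueness
    (L T μ γ : ℝ) (hL : 0 < L) (hT : 0 < T) (hμ : 0 < μ) (hγ : 1 < γ)
    (ρ₀ : ℝ → ℝ) (hρ₀ : ContinuousOn ρ₀ (Icc 0 L))
    (hρ₀nonneg : ∀ y ∈ Icc (0:ℝ) L, 0 ≤ ρ₀ y)
    (J₁ v₁ π₁ Jt₁ vy₁ vt₁ w₁ πy₁ πt₁ : ℝ → ℝ → ℝ)
    (J₂ v₂ π₂ Jt₂ vy₂ vt₂ w₂ πy₂ πt₂ : ℝ → ℝ → ℝ)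
    (hsol₁ : ClassicalSolution L T μ γ ρ₀ J₁ v₁ π₁ Jt₁ vy₁ vt₁ w₁ πy₁ πt₁)
    (hsol₂ : ClassicalSolution L T μ γ ρ₀ J₂ v₂ π₂ Jt₂ vy₂ vt₂ w₂ πy₂ πt₂)
    (hbc₁ : ∀ t ∈ Icc (0:ℝ) T, v₁ 0 t = 0 ∧ v₁ L t = 0)
    (hbc₂ : ∀ t ∈ Icc (0:ℝ) T, v₂ 0 t = 0 ∧ v₂ L t = 0)
    (hJ0 : ∀ y ∈ Icc (0:ℝ) L, J₁ y 0 = J₂ y 0)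
    (hv0 : ∀ y ∈ Icc (0:ℝ) L, v₁ y 0 = v₂ y 0)
    (hπ0 : ∀ y ∈ Icc (0:ℝ) L, π₁ y 0 = π₂ y 0) :
    ∀ y ∈ Icc (0:ℝ) L, ∀ t ∈ Icc (0:ℝ) T,
      J₁ y t = J₂ y t ∧ v₁ y t = v₂ y t ∧ π₁ y t = π₂ y t := by
  have hu : Set.uIcc 0 L = Set.Icc 0 L := Set.uIcc_of_le hL.le
  have slice : ∀ G : ℝ → ℝ → ℝ,
      ContinuousOn (fun p : ℝ × ℝ => G p.1 p.2) (Set.Icc 0 L ×ˢ Set.Icc 0 T) →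
      ∀ t ∈ Set.Icc (0:ℝ) T, ContinuousOn (fun y => G y t) (Set.Icc 0 L) := by
    intro G hG t ht
    exact hG.comp (f := fun y : ℝ => (y, t)) (by fun_prop) (fun y hy => ⟨hy, ht⟩)
  have cρ : ContinuousOn (fun p : ℝ × ℝ => ρ₀ p.1) (Set.Icc 0 L ×ˢ Set.Icc 0 T) :=
    hρ₀.comp continuousOn_fst (fun p hp => hp.1)
  have cJ₁ := hsol₁.contJ
  have cv₁ := hsol₁.contv
  have cp₁ := hsol₁.contPi
  have cJt₁ := hsol₁.contJt
  have cvy₁ := hsol₁.contvy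
  have cvt₁ := hsol₁.contvt
  have cw₁ := hsol₁.contw
  have cpy₁ := hsol₁.contPiy
  have cpt₁ := hsol₁.contPit
  have cJ₂ := hsol₂.contJ
  have cv₂ := hsol₂.contv
  have cp₂ := hsol₂.contPi
  have cJt₂ := hsol₂.contJt
  have cvy₂ := hsol₂.contvy
  have cvt₂ := hsol₂.contvt
  have cw₂ := hsol₂.contw
  have cpy₂ := hsol₂.contPiy
  have cpt₂ := hsol₂.contPit
  have cA₁ : ContinuousOn (fun p : ℝ × ℝ => vy₁ p.1 p.2 / J₁ p.1 p.2)
      (Set.Icc 0 L ×ˢ Set.Icc 0 T) :=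
    cvy₁.div cJ₁ (fun p hp => (hsol₁.Jpos _ hp.1 _ hp.2).ne')
  have cA₂ : ContinuousOn (fun p : ℝ × ℝ => vy₂ p.1 p.2 / J₂ p.1 p.2)
      (Set.Icc 0 L ×ˢ Set.Icc 0 T) :=
    cvy₂.div cJ₂ (fun p hp => (hsol₂.Jpos _ hp.1 _ hp.2).ne')
  obtain ⟨C, hCb⟩ : ∃ C : ℝ, ∀ p ∈ (Set.Icc (0:ℝ) L ×ˢ Set.Icc (0:ℝ) T),
      ‖((J₁ p.1 p.2 - μ * (vy₂ p.1 p.2 / J₂ p.1 p.2)) ^ 2 + (J₁ p.1 p.2 +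
        (μ * (γ - 1) * (vy₁ p.1 p.2 / J₁ p.1 p.2 + vy₂ p.1 p.2 / J₂ p.1 p.2)
          - γ * π₁ p.1 p.2)) ^ 2) / (2 * μ * J₁ p.1 p.2)
        + |vy₂ p.1 p.2 / J₂ p.1 p.2| * (2 + γ)‖ ≤ C := by
    refine (isCompact_Icc.prod isCompact_Icc).exists_bound_of_continuousOn ?_
    refine ContinuousOn.add (ContinuousOn.div ?_ (by fun_prop) ?_) ?_
    · exact ((cJ₁.sub (cA₂.const_mul μ)).pow 2).add
        ((cJ₁.add (((cA₁.add cA₂).const_mul (μ * (γ - 1))).sub (cp₁.const_mul γ))).pow 2)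
    · intro p hp
      have := hsol₁.Jpos _ hp.1 _ hp.2
      positivity
    · exact cA₂.abs.mul continuousOn_const
  have key := energy_zero L T (2 * C) hL hT
    (fun y t => (ρ₀ y * (v₁ y t - v₂ y t) ^ 2 + (J₁ y t - J₂ y t) ^ 2
      + (π₁ y t - π₂ y t) ^ 2) / 2)
    (fun y t => ρ₀ y * (v₁ y t - v₂ y t) * (vt₁ y t - vt₂ y t)
      + (J₁ y t - J₂ y t) * (Jt₁ y t - Jt₂ y t) + (π₁ y t - π₂ y t) * (πt₁ y t - πt₂ y t))
    ((((cρ.mul ((cv₁.sub cv₂).pow 2)).add ((cJ₁.sub cJ₂).pow 2)).add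
      ((cp₁.sub cp₂).pow 2)).div_const 2)
    ((((cρ.mul (cv₁.sub cv₂)).mul (cvt₁.sub cvt₂)).add
      ((cJ₁.sub cJ₂).mul (cJt₁.sub cJt₂))).add ((cp₁.sub cp₂).mul (cpt₁.sub cpt₂)))
    ?_ ?_ ?_ ?_
  rotate_left
  · intro y hy t ht
    have d1 := (hsol₁.hvt y hy t ht).sub (hsol₂.hvt y hy t ht)
    have d2 := (hsol₁.hJt y hy t ht).sub (hsol₂.hJt y hy t ht)
    have d3 := (hsol₁.hPit y hy t ht).sub (hsol₂.hPit y hy t ht)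
    have d := ((((d1.pow 2).const_mul (ρ₀ y)).add (d2.pow 2)).add (d3.pow 2)).div_const 2
    refine d.congr_deriv ?_
    simp
    ring
  · intro y hy t ht
    have := hρ₀nonneg y hy
    positivity
  · intro y hy
    simp [hJ0 y hy, hv0 y hy, hπ0 y hy]
  · intro t ht
    set D : ℝ → ℝ := fun y => (vy₁ y t - vy₂ y t) *
        (μ * (vy₁ y t / J₁ y t - vy₂ y t / J₂ y t) - (π₁ y t - π₂ y t))
      + (v₁ y t - v₂ y t) * (μ * (w₁ y t - w₂ y t) - (πy₁ y t - πy₂ y t)) with hD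
    have sJ₁ := slice _ cJ₁ t ht
    have sv₁ := slice _ cv₁ t ht
    have sp₁ := slice _ cp₁ t ht
    have sJt₁ := slice _ cJt₁ t ht
    have svy₁ := slice _ cvy₁ t ht
    have svt₁ := slice _ cvt₁ t ht
    have sw₁ := slice _ cw₁ t ht
    have spy₁ := slice _ cpy₁ t ht
    have spt₁ := slice _ cpt₁ t ht
    have sJ₂ := slice _ cJ₂ t ht
    have sv₂ := slice _ cv₂ t ht
    have sp₂ := slice _ cp₂ t ht
    have sJt₂ := slice _ cJt₂ t ht
    have svy₂ := slice _ cvy₂ t ht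
    have svt₂ := slice _ cvt₂ t ht
    have sw₂ := slice _ cw₂ t ht
    have spy₂ := slice _ cpy₂ t ht
    have spt₂ := slice _ cpt₂ t ht
    have sA₁ := slice (fun y t => vy₁ y t / J₁ y t) cA₁ t ht
    have sA₂ := slice (fun y t => vy₂ y t / J₂ y t) cA₂ t ht
    have cD : ContinuousOn D (Set.Icc 0 L) :=
      ((svy₁.sub svy₂).mul (((sA₁.sub sA₂).const_mul μ).sub (sp₁.sub sp₂))).add
        ((sv₁.sub sv₂).mul (((sw₁.sub sw₂).const_mul μ).sub (spy₁.sub spy₂)))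
    have iD : IntervalIntegrable D volume 0 L := (hu ▸ cD).intervalIntegrable
    have zD : ∫ y in (0:ℝ)..L, D y = 0 := by
      have := intervalIntegral.integral_eq_sub_of_hasDerivAt_of_le hL.le
        (f := fun y => (v₁ y t - v₂ y t) *
          (μ * (vy₁ y t / J₁ y t - vy₂ y t / J₂ y t) - (π₁ y t - π₂ y t))) (f' := D)
        ((sv₁.sub sv₂).mul (((sA₁.sub sA₂).const_mul μ).sub (sp₁.sub sp₂))) ?_ iD
      · rw [this, (hbc₁ t ht).1, (hbc₁ t ht).2, (hbc₂ t ht).1, (hbc₂ t ht).2]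
        ring
      · intro y hy
        have hy' := Set.Ioo_subset_Icc_self hy
        have e1 := (hsol₁.hvy y hy' t ht).sub (hsol₂.hvy y hy' t ht)
        have e2 := (hsol₁.hw y hy' t ht).sub (hsol₂.hw y hy' t ht)
        have e3 := (hsol₁.hPiy y hy' t ht).sub (hsol₂.hPiy y hy' t ht)
        exact (e1.mul ((e2.const_mul μ).sub e3)).hasDerivAt (Icc_mem_nhds hy.1 hy.2)
    have cF' : ContinuousOn (fun y => ρ₀ y * (v₁ y t - v₂ y t) * (vt₁ y t - vt₂ y t)
      + (J₁ y t - J₂ y t) * (Jt₁ y t - Jt₂ y t) + (π₁ y t - π₂ y t) * (πt₁ y t - πt₂ y t))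
      (Set.Icc 0 L) := by fun_prop
    have cF : ContinuousOn (fun y => (ρ₀ y * (v₁ y t - v₂ y t) ^ 2 + (J₁ y t - J₂ y t) ^ 2
      + (π₁ y t - π₂ y t) ^ 2) / 2) (Set.Icc 0 L) := by fun_prop
    have iF' := (hu ▸ cF' : ContinuousOn _ (Set.uIcc 0 L)).intervalIntegrable (μ := volume)
    have iF := (hu ▸ cF : ContinuousOn _ (Set.uIcc 0 L)).intervalIntegrable (μ := volume)
    have hsub := intervalIntegral.integral_sub iF' iD
    rw [zD, sub_zero] at hsub
    rw [← hsub, ← intervalIntegral.integral_const_mul]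
    refine intervalIntegral.integral_mono_on hL.le (iF'.sub iD) (iF.const_mul _) ?_
    intro y hy
    have j1 := hsol₁.Jpos y hy t ht
    have j2 := hsol₂.Jpos y hy t ht
    have hb := alg_bound μ γ (J₁ y t) (J₂ y t) (vy₁ y t / J₁ y t) (vy₂ y t / J₂ y t)
      (π₁ y t) (π₂ y t) hμ hγ j1
    have hC1 := (le_abs_self _).trans (hCb (y, t) ⟨hy, ht⟩)
    have hC0 : 0 ≤ C := (norm_nonneg _).trans (hCb (y, t) ⟨hy, ht⟩)
    have hb2 := hb.trans (mul_le_mul_of_nonneg_right hC1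
      (add_nonneg (sq_nonneg (J₁ y t - J₂ y t)) (sq_nonneg (π₁ y t - π₂ y t))))
    have q1 : J₁ y t * (vy₁ y t / J₁ y t) = vy₁ y t := by field_simp
    have q2 : J₂ y t * (vy₂ y t / J₂ y t) = vy₂ y t := by field_simp
    rw [q1, q2] at hb2
    have r1 := hsol₁.eq1 y hy t ht
    have r2 := hsol₂.eq1 y hy t ht
    have m1 := hsol₁.eq2 y hy t ht
    have m2 := hsol₂.eq2 y hy t ht
    have n1 := eq_sub_of_add_eq (hsol₁.eq3 y hy t ht)
    have n2 := eq_sub_of_add_eq (hsol₂.eq3 y hy t ht)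
    have hρv := mul_nonneg hC0 (mul_nonneg (hρ₀nonneg y hy) (sq_nonneg (v₁ y t - v₂ y t)))
    have hm : ρ₀ y * (v₁ y t - v₂ y t) * (vt₁ y t - vt₂ y t) =
        (v₁ y t - v₂ y t) * (μ * (w₁ y t - w₂ y t) - (πy₁ y t - πy₂ y t)) := by
      linear_combination (v₁ y t - v₂ y t) * (m1 - m2)
    simp only [hD]
    rw [hm, r1, r2, n1, n2]
    linarith
  have hJ : ∀ y ∈ Icc (0:ℝ) L, ∀ t ∈ Icc (0:ℝ) T, J₁ y t = J₂ y t ∧ π₁ y t = π₂ y t := by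
    intro y hy t ht
    have k := key y hy t ht
    have h1 := mul_nonneg (hρ₀nonneg y hy) (sq_nonneg (v₁ y t - v₂ y t))
    have h2 := sq_nonneg (J₁ y t - J₂ y t)
    have h3 := sq_nonneg (π₁ y t - π₂ y t)
    constructor
    · exact sub_eq_zero.1 (pow_eq_zero_iff two_ne_zero |>.1 (by linarith))
    · exact sub_eq_zero.1 (pow_eq_zero_iff two_ne_zero |>.1 (by linarith))
  intro y hy t ht
  refine ⟨(hJ y hy t ht).1, ?_, (hJ y hy t ht).2⟩
  have hvy : ∀ x ∈ Icc (0:ℝ) L, vy₁ x t = vy₂ x t := by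
    intro x hx
    rw [← hsol₁.eq1 x hx t ht, ← hsol₂.eq1 x hx t ht]
    have d2 := (hsol₂.hJt x hx t ht).congr (f₁ := fun s => J₁ x s)
      (fun s hs => (hJ x hx s hs).1) (hJ x hx t ht).1
    exact (uniqueDiffOn_Icc hT t ht).eq_deriv _ (hsol₁.hJt x hx t ht) d2
  have hconst := constant_of_has_deriv_right_zero (f := fun x => v₁ x t - v₂ x t)
    (a := 0) (b := L) ((slice _ cv₁ t ht).sub (slice _ cv₂ t ht)) ?_ y hy
  · simp only [(hbc₁ t ht).1, (hbc₂ t ht).1] at hconst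
    linarith
  · intro x hx
    have hx' := Set.Ico_subset_Icc_self hx
    have d := (hsol₁.hvy x hx' t ht).sub (hsol₂.hvy x hx' t ht)
    rw [hvy x hx', sub_self] at d
    exact d.mono_of_mem_nhdsWithin (Icc_mem_nhdsGE_of_mem hx)
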